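/- Let q = p^m ≡ 5 (mod 8) be a prime power with primitive element α of F_q, let q = s² + t² be the Katre–Rajwade-normalized representation with t = ±2, and let D = C_0^4 ∪ C_3^4. Then: (i) F_q^*∖D = −D = C_1^4 ∪ C_2^4 is a Paley skew PDS corresponding to the Paley PDS C_0^2 if t = −2 and to C_1^2 if t = 2; (ii) F_q∖D = C_1^4 ∪ C_2^4 ∪ {0} is a skew PDS corresponding to the (q,(q+1)/2,(q+3)/4,(q−1)/4)-PDS C_1^2 ∪ {0} if t = −2 and to the (q,(q+1)/2,(q+3)/4,(q−1)/4)-PDS C_0^2 ∪ {0} if t = 2. -/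

import Mathlib

open Finset

section Defs

variable {G : Type*} [AddCommGroup G] [Fintype G] [DecidableEq G]

/-- The multiset `Δ(D)` of internal differences `x - y` (for `x ≠ y` in `D`). -/
def intDiff (D : Finset G) : Multiset G :=
  ((D ×ˢ D).filter (fun p => p.1 ≠ p.2)).val.map (fun p => p.1 - p.2)

/-- The multiset `Δ(D, E)` of external differences `x - y` for `x ∈ D`, `y ∈ E`. -/
def extDiff (D E : Finset G) : Multiset G :=
  (D ×ˢ E).val.map (fun p => p.1 - p.2)

/-- The finset `G^*` of nonzero elements of `G`. -/
def Gstar (G : Type*) [AddCommGroup G] [Fintype G] [DecidableEq G] : Finset G :=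
  Finset.univ.erase 0

/-- `A` is a `(v, k, lam, mu)` partial difference set in `G`:
`Δ(A) = lam • A^* + mu • (G^* \ A)`. -/
def IsPDS (A : Finset G) (v k lam mu : ℕ) : Prop :=
  Fintype.card G = v ∧ A.card = k ∧
    intDiff A = lam • (A.erase 0).val + mu • (Gstar G \ A).val

/-- `D` is a `(v, k, lam, mu)` skew partial difference set corresponding to the
`(v, k, lam, mu)`-PDS `A`: `Δ(D) = lam • A^* + mu • (G^* \ A)`. -/
def IsSkewPDS (D A : Finset G) (v k lam mu : ℕ) : Prop :=
  IsPDS A v k lam mu ∧ D.card = k ∧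
    intDiff D = lam • (A.erase 0).val + mu • (Gstar G \ A).val

/-- `D` is an `(n, m, k₁, …, k_m; lam, mu)` disjoint partial difference family relative
to `T`: the `D i` are pairwise disjoint subsets of `G^*` of sizes `k i`, and
`∑ i, Δ(D i) = lam • T + mu • (G^* \ T)`. -/
def IsDPDF {ι : Type*} [Fintype ι] (D : ι → Finset G) (n m : ℕ) (k : ι → ℕ)
    (T : Finset G) (lam mu : ℕ) : Prop :=
  Fintype.card G = n ∧ Fintype.card ι = m ∧
    (∀ i, (0 : G) ∉ D i) ∧ (∀ i, (D i).card = k i) ∧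
    (Pairwise (fun i j => Disjoint (D i) (D j))) ∧
    ∑ i, intDiff (D i) = lam • T.val + mu • (Gstar G \ T).val

/-- `D` is an `(n, m, k₁, …, k_m; lam, mu)` external partial difference family relative
to `T`: the `D i` are pairwise disjoint subsets of `G^*` of sizes `k i`, and
`∑_{i ≠ j}, Δ(D i, D j) = lam • T + mu • (G^* \ T)`. -/
def IsEPDF {ι : Type*} [Fintype ι] [DecidableEq ι] (D : ι → Finset G) (n m : ℕ)
    (k : ι → ℕ) (T : Finset G) (lam mu : ℕ) : Prop :=
  Fintype.card G = n ∧ Fintype.card ι = m ∧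
    (∀ i, (0 : G) ∉ D i) ∧ (∀ i, (D i).card = k i) ∧
    (Pairwise (fun i j => Disjoint (D i) (D j))) ∧
    ∑ i, ∑ j ∈ Finset.univ.erase i, extDiff (D i) (D j)
      = lam • T.val + mu • (Gstar G \ T).val

/-- `D` is an `(n, m, k₁, …, k_m, lam)` disjoint difference family:
`∑ i, Δ(D i) = lam • G^*`. -/
def IsDDF {ι : Type*} [Fintype ι] (D : ι → Finset G) (n m : ℕ) (k : ι → ℕ)
    (lam : ℕ) : Prop :=
  Fintype.card G = n ∧ Fintype.card ι = m ∧
    (∀ i, (0 : G) ∉ D i) ∧ (∀ i, (D i).card = k i) ∧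
    (Pairwise (fun i j => Disjoint (D i) (D j))) ∧
    ∑ i, intDiff (D i) = lam • (Gstar G).val

/-- `D` is an `(n, m, k₁, …, k_m, lam)` external difference family:
`∑_{i ≠ j}, Δ(D i, D j) = lam • G^*`. -/
def IsEDF {ι : Type*} [Fintype ι] [DecidableEq ι] (D : ι → Finset G) (n m : ℕ)
    (k : ι → ℕ) (lam : ℕ) : Prop :=
  Fintype.card G = n ∧ Fintype.card ι = m ∧
    (∀ i, (0 : G) ∉ D i) ∧ (∀ i, (D i).card = k i) ∧
    (Pairwise (fun i j => Disjoint (D i) (D j))) ∧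
    ∑ i, ∑ j ∈ Finset.univ.erase i, extDiff (D i) (D j) = lam • (Gstar G).val

end Defs

section Cyclotomy

variable {F : Type*} [Field F] [Fintype F] [DecidableEq F]

/-- The cyclotomic class `C_i^e = α^i ⟨α^e⟩` of order `e` in the finite field `F`,
with respect to the primitive element `α`.  (Since `α` has multiplicative order at most
`|F| - 1`, letting `j` range over `0, …, |F| - 1` captures the whole class.) -/
def cycClass (α : F) (e i : ℕ) : Finset F :=
  (Finset.range (Fintype.card F)).image (fun j => α ^ (e * j + i))

/-- `α` is a primitive element of the finite field `F`: every nonzero element of `F`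
is a power of `α`. -/
def IsPrimitiveElt (α : F) : Prop :=
  ∀ x : F, x ≠ 0 → ∃ n : ℕ, α ^ n = x

end Cyclotomy

lemma aux_lucas (p : ℕ) (hp : p.Prime) (k : ℕ) (hk : p = 4 * k + 1) (m : ℕ) :
    ¬ p ∣ (3 * ((p ^ m - 1) / 4)).choose ((p ^ m - 1) / 4) := by
  have := Fact.mk hp
  have key : ∀ m, ∃ a, p ^ m = 4 * a + 1 ∧ ¬ p ∣ (3 * a).choose a := by
    intro m
    induction m with
    | zero => exact ⟨0, by simp, by simpa using hp.one_lt.ne'⟩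
    | succ m ih =>
      obtain ⟨a, ha, hna⟩ := ih
      refine ⟨a * p + k, by rw [pow_succ, ha]; rw [hk]; ring, ?_⟩
      have hm := Choose.choose_modEq_choose_mod_mul_choose_div_nat (n := 3 * (a * p + k)) (k := a * p + k) (p := p)
      have e1 : (3 * (a * p + k)) % p = 3 * k := by
        rw [show 3 * (a * p + k) = 3 * k + p * (3 * a) by ring, Nat.add_mul_mod_self_left, Nat.mod_eq_of_lt (by omega)]
      have e2 : (a * p + k) % p = k := by
        rw [show (a * p + k) = k + p * a by ring, Nat.add_mul_mod_self_left, Nat.mod_eq_of_lt (by omega)]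
      have e3 : (3 * (a * p + k)) / p = 3 * a := by
        rw [show 3 * (a * p + k) = 3 * k + p * (3 * a) by ring, Nat.add_mul_div_left _ _ hp.pos, Nat.div_eq_of_lt (by omega), zero_add]
      have e4 : (a * p + k) / p = a := by
        rw [show (a * p + k) = k + p * a by ring, Nat.add_mul_div_left _ _ hp.pos, Nat.div_eq_of_lt (by omega), zero_add]
      rw [e1, e2, e3, e4] at hm
      intro hd
      rw [(hm.dvd_iff dvd_rfl)] at hd
      rcases hp.dvd_mul.1 hd with h | h
      · have h2 : p ∣ (3 * k).factorial := by
          rw [← Nat.choose_mul_factorial_mul_factorial (show k ≤ 3 * k by omega), mul_assoc]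
          exact Dvd.dvd.mul_right h _
        have := (hp.dvd_factorial).1 h2
        omega
      · exact hna h
  obtain ⟨a, ha, hna⟩ := key m
  have : (p ^ m - 1) / 4 = a := by omega
  rwa [this]

section
variable {F : Type*} [Field F] [Fintype F]

lemma aux_sum_pow (i : ℕ) (hi : i ≠ 0) :
    ∑ x : F, x ^ i = if Fintype.card F - 1 ∣ i then -1 else 0 := by
  classical
  rw [← FiniteField.sum_pow_units F i]
  let φ : Fˣ ↪ F := ⟨fun x ↦ x, Units.val_injective⟩
  have : univ.map φ = univ \ {0} := by
    ext x
    simpa only [mem_map, mem_univ, Function.Embedding.coeFn_mk, true_and, mem_sdiff,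
      mem_singleton, φ] using! isUnit_iff_ne_zero
  calc
    ∑ x : F, x ^ i = ∑ x ∈ univ \ {(0 : F)}, x ^ i := by
      rw [← sum_sdiff ({0} : Finset F).subset_univ, sum_singleton, zero_pow hi, add_zero]
    _ = ∑ x : Fˣ, (x ^ i : F) := by simp [φ, ← this, univ.sum_map φ]

lemma aux_sum_expand (a b : ℕ) :
    ∑ x : F, x ^ a * (1 - x) ^ b =
      ∑ j ∈ range (b + 1), (-1) ^ j * (b.choose j : F) * ∑ x : F, x ^ (a + j) := by
  simp_rw [mul_sum]
  rw [sum_comm]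
  refine sum_congr rfl fun x _ => ?_
  rw [show (1 - x) = (-x) + 1 by ring, add_pow, mul_sum]
  refine sum_congr rfl fun j _ => ?_
  rw [neg_pow, pow_add]; ring

lemma aux_sum_zero (k : ℕ) (hk : Fintype.card F = 4 * k + 1) (hk0 : 0 < k) :
    ∑ x : F, x ^ k * (1 - x) ^ k = 0 := by
  rw [aux_sum_expand]
  refine sum_eq_zero fun j hj => ?_
  rw [mem_range] at hj
  rw [FiniteField.sum_pow_lt_card_sub_one F _ (by omega), mul_zero]

lemma aux_sum_ne (k : ℕ) (hk : Fintype.card F = 4 * k + 1) (hk0 : 0 < k)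
    (hc : ((3 * k).choose k : F) ≠ 0) :
    ∑ x : F, x ^ (3 * k) * (1 - x) ^ (3 * k) ≠ 0 := by
  rw [aux_sum_expand, sum_eq_single k]
  · rw [aux_sum_pow _ (by omega), if_pos ⟨1, by omega⟩]
    simp [hc]
  · intro j hj hjk
    rw [mem_range] at hj
    rw [aux_sum_pow _ (by omega), if_neg, mul_zero]
    rintro ⟨c, hc⟩
    rw [hk] at hc
    have : c = 0 ∨ c = 1 ∨ 2 ≤ c := by omega
    rcases this with rfl | rfl | h
    · omega
    · omega
    · have := Nat.mul_le_mul_left (4*k+1-1) h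
      omega
  · intro h; simp at h; omega

lemma aux_corr {R : Type*} [CommRing R] (χ ψ : MulChar F R) (d : F) (hd : d ≠ 0) :
    ∑ x : F, χ x * ψ (x - d) = χ d * ψ d * ψ (-1) * jacobiSum χ ψ := by
  rw [jacobiSum, mul_sum]
  refine (Equiv.sum_comp (Equiv.mulLeft₀ d hd) (fun x => χ x * ψ (x - d))).symm.trans ?_
  refine sum_congr rfl fun x _ => ?_
  change χ (d * x) * ψ (d * x - d) = _
  rw [show d * x - d = d * (-1) * (1 - x) by ring]
  simp only [map_mul]; ring
end

lemma aux_int (p m : ℕ) (hp : p.Prime) (q s t u v : ℤ) (hq : q = p ^ m)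
    (hst : q = s ^ 2 + t ^ 2) (huv : q = u ^ 2 + v ^ 2) (ht2 : t = -2 ∨ t = 2)
    (hpu : ¬ (p : ℤ) ∣ u * t - v * s) (hpq : (p : ℤ) ∣ u * t + v * s) 
    (hv : v % 4 = 2) (huv4 : (u + v) % 4 = 1) (hs : s % 4 = 1) : v = t := by
  have hpp : Prime (p : ℤ) := Nat.prime_iff_prime_int.1 hp
  have h1 : q ∣ (u * t - v * s) * (u * t + v * s) :=
    ⟨u ^ 2 + t ^ 2 - q, by
      have e1 : s ^ 2 = q - t ^ 2 := by linarith
      have e2 : v ^ 2 = q - u ^ 2 := by linarith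
      linear_combination (-v^2) * e1 - (q - t^2) * e2⟩
  have hcop : IsCoprime q (u * t - v * s) := by
    rw [hq]
    exact ((Prime.coprime_iff_not_dvd hpp).2 hpu).pow_left
  obtain ⟨c, hc⟩ := hcop.dvd_of_dvd_mul_left h1
  have h2 : (u * t + v * s) ^ 2 + (u * s - v * t) ^ 2 = q ^ 2 := by
    rw [show q ^ 2 = q * q by ring]; nth_rw 1 [hst]; rw [huv]; ring
  have hqo : q % 2 = 1 := by
    rcases ht2 with rfl | rfl <;> rw [hst] <;> norm_num [pow_two, Int.add_emod, Int.mul_emod, show s % 2 = 1 by omega]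
  have hq0 : 0 < q := by rcases ht2 with rfl | rfl <;> nlinarith [sq_nonneg s]
  have hc1 : c ^ 2 ≤ 1 := by
    rw [hc] at h2
    have : q ^ 2 * c ^ 2 ≤ q ^ 2 * 1 := by nlinarith [sq_nonneg (u * s - v * t)]
    exact le_of_mul_le_mul_left this (by positivity)
  have hce : c % 2 = 0 := by
    have : (u * t + v * s) % 2 = 0 := by
      rcases ht2 with rfl | rfl <;> simp [Int.add_emod, Int.mul_emod, show v % 2 = 0 by omega]
    rw [hc, Int.mul_emod, hqo] at this
    omega
  have hc0 : c = 0 := by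
    have : c < 2 := by nlinarith
    have : -2 < c := by nlinarith
    omega
  rw [hc0, mul_zero] at hc
  have h3 : q * (t ^ 2 - v ^ 2) = 0 := by
    have : (u * t) ^ 2 = (v * s) ^ 2 := by rw [show u * t = - (v * s) by linarith]; ring
    have e1 : s ^ 2 = q - t ^ 2 := by linarith
    have e2 : u ^ 2 = q - v ^ 2 := by linarith
    rw [mul_pow, mul_pow, e1, e2] at this
    linear_combination this
  have h4 : t ^ 2 = v ^ 2 := by
    rcases mul_eq_zero.1 h3 with h | h <;> linarith
  rcases sq_eq_sq_iff_eq_or_eq_neg.1 h4 with h | h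
  · exact h.symm
  · exfalso
    subst h
    have hv0 : v ≠ 0 := by rintro rfl; simp at hv
    have : v * (s - u) = 0 := by linarith
    rcases mul_eq_zero.1 this with h | h
    · exact hv0 h
    · omega

lemma aux_count {F : Type*} [Field F] [Fintype F] [DecidableEq F] (A : Finset F) (d : F) (hd : d ≠ 0) :
    ((intDiff A).count d : ℤ) =
      ∑ x : F, (if x ∈ A then 1 else 0) * (if x - d ∈ A then 1 else 0) := by
  rw [intDiff, Multiset.count_map, ← Finset.filter_val, Finset.card_val]
  have : ∑ x : F, (if x ∈ A then (1 : ℤ) else 0) * (if x - d ∈ A then 1 else 0) =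
      ((univ.filter fun x => x ∈ A ∧ x - d ∈ A).card : ℤ) := by
    rw [Finset.card_filter]
    push_cast
    refine sum_congr rfl fun x _ => ?_
    by_cases h1 : x ∈ A <;> simp [h1]
  rw [this]
  congr 1
  refine Finset.card_bij (fun p _ => p.1) ?_ ?_ ?_
  · rintro ⟨x, y⟩ h
    simp only [mem_filter, mem_product] at h
    obtain ⟨⟨⟨hx, hy⟩, -⟩, hxy⟩ := h
    subst hxy
    simpa using ⟨hx, hy⟩
  · rintro ⟨x, y⟩ h ⟨x', y'⟩ h' hxx
    simp only [mem_filter, mem_product] at h h' hxx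
    subst hxx
    have := h.2.symm.trans h'.2
    simp at this
    rw [this]
  · intro x hx
    simp only [mem_filter, mem_univ, true_and] at hx
    exact ⟨(x, x - d), by simpa [hx] using fun h => hd (sub_eq_self.1 (Eq.symm h)), rfl⟩

lemma aux_count_zero {F : Type*} [Field F] [Fintype F] [DecidableEq F] (A : Finset F) :
    (intDiff A).count 0 = 0 := by
  rw [Multiset.count_eq_zero, intDiff]
  simp only [Multiset.mem_map, not_exists]
  rintro ⟨x, y⟩ ⟨h, h'⟩
  simp [sub_eq_zero] at h h'
  exact h.2 h'

/-- the counting lemma -/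
lemma aux_main {F : Type*} [Field F] [Fintype F] [DecidableEq F] (A : Finset F)
    (g : F → ℤ) (c : ℤ) (hA : ∀ x, (2 : ℤ) * (if x ∈ A then 1 else 0) = g x + 1 + c * (if x = 0 then 1 else 0))
    (hg : ∑ x, g x = 0) (d : F) (hd : d ≠ 0) :
    4 * ((intDiff A).count d : ℤ) =
      ∑ x, g x * g (x - d) + Fintype.card F + 2 * c + c * (g d + g (-d)) := by
  rw [aux_count A d hd, mul_sum]
  have e : ∀ x : F, (4 : ℤ) * ((if x ∈ A then 1 else 0) * (if x - d ∈ A then 1 else 0)) =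
      g x * g (x - d) + g x + g (x - d) + 1 + c * ((if x = 0 then 1 else 0) * (g (x - d) + 1))
       + c * ((if x - d = 0 then 1 else 0) * (g x + 1)) := by
    intro x
    have h1 := hA x
    have h2 := hA (x - d)
    have h3 : c * (if x = 0 then 1 else 0) * (c * (if x - d = 0 then 1 else 0)) = 0 := by
      by_cases hx : x = 0
      · simp [hx, hd]
      · simp [hx]
    calc _ = (2 * (if x ∈ A then (1:ℤ) else 0)) * (2 * (if x - d ∈ A then 1 else 0)) := by ring
      _ = _ := by rw [h1, h2]; linear_combination h3
  rw [sum_congr rfl fun x _ => e x]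
  have hg' : ∑ x, g (x - d) = 0 := by
    rw [← hg]; exact (Equiv.subRight d).sum_comp g
  simp only [sum_add_distrib, hg, hg', ← mul_sum, ite_mul, one_mul, zero_mul, sub_eq_zero]
  simp
  ring

lemma aux_card {F : Type*} [Field F] [Fintype F] [DecidableEq F] (A : Finset F)
    (g : F → ℤ) (c : ℤ) (hA : ∀ x, (2 : ℤ) * (if x ∈ A then 1 else 0) = g x + 1 + c * (if x = 0 then 1 else 0))
    (hg : ∑ x, g x = 0) : 2 * (A.card : ℤ) = Fintype.card F + c := by
  have := sum_congr rfl fun x (_ : x ∈ (univ : Finset F)) => hA x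
  rw [← mul_sum] at this
  simpa [sum_add_distrib, ← mul_sum, hg] using this

lemma aux_diff_eq {F : Type*} [Field F] [Fintype F] [DecidableEq F] (D A : Finset F) (lam mu : ℕ)
    (h1 : ∀ d, d ≠ 0 → d ∈ A → (intDiff D).count d = lam)
    (h2 : ∀ d, d ≠ 0 → d ∉ A → (intDiff D).count d = mu) :
    intDiff D = lam • (A.erase 0).val + mu • (Gstar F \ A).val := by
  ext d
  rw [Multiset.count_add, Multiset.count_nsmul, Multiset.count_nsmul,
    Multiset.count_eq_of_nodup (Finset.nodup _), Multiset.count_eq_of_nodup (Finset.nodup _)]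
  simp only [Finset.mem_val]
  by_cases hd : d = 0
  · subst hd
    rw [aux_count_zero]
    simp [Gstar]
  · by_cases hA : d ∈ A
    · rw [h1 d hd hA]
      simp [hd, hA]
    · rw [h2 d hd hA]
      simp [Gstar, hd, hA]

lemma aux_mem_cyc {F : Type*} [Field F] [Fintype F] [DecidableEq F] (α : F) (h0 : α ≠ 0) (e i : ℕ) (x : F) :
    x ∈ cycClass α e i ↔ ∃ j : ℕ, α ^ (e * j + i) = x := by
  simp only [cycClass, mem_image, mem_range]
  constructor
  · rintro ⟨j, -, h⟩; exact ⟨j, h⟩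
  · rintro ⟨j, h⟩
    have hc : 1 < Fintype.card F := Fintype.one_lt_card
    refine ⟨j % (Fintype.card F - 1), (Nat.mod_lt _ (by omega)).trans (by omega), ?_⟩
    rw [← h]
    nth_rw 2 [← Nat.mod_add_div j (Fintype.card F - 1)]
    rw [mul_add, show e * (j % (Fintype.card F - 1)) + e * ((Fintype.card F - 1) * (j / (Fintype.card F - 1))) + i
      = e * (j % (Fintype.card F - 1)) + i + (Fintype.card F - 1) * (e * (j / (Fintype.card F - 1))) by ring, pow_add _ (_ + i), pow_mul _ (Fintype.card F - 1),
      FiniteField.pow_card_sub_one_eq_one α h0]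
    simp

section Char
variable {F : Type*} [Field F] [Fintype F] [DecidableEq F]

/-- the imaginary unit of the Gaussian integers -/
def gI : GaussianInt := ⟨0, 1⟩

lemma gI_sq : gI ^ 2 = -1 := by rw [pow_two]; decide
lemma gI_four : gI ^ 4 = 1 := by rw [show 4 = 2 * 2 by norm_num, pow_mul, gI_sq]; norm_num
lemma gI_mod (n : ℕ) : gI ^ n = gI ^ (n % 4) := by
  conv_lhs => rw [← Nat.mod_add_div n 4, pow_add, pow_mul, gI_four, one_pow, mul_one]
lemma gI_cases (n : ℕ) : (n % 4 = 0 ∧ gI ^ n = 1) ∨ (n % 4 = 1 ∧ gI ^ n = ⟨0, 1⟩) ∨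
    (n % 4 = 2 ∧ gI ^ n = -1) ∨ (n % 4 = 3 ∧ gI ^ n = ⟨0, -1⟩) := by
  have h : n % 4 = 0 ∨ n % 4 = 1 ∨ n % 4 = 2 ∨ n % 4 = 3 := by omega
  rcases h with h | h | h | h
  · left; rw [gI_mod, h]; simp
  · right; left; rw [gI_mod, h]; simp [gI]
  · right; right; left; rw [gI_mod, h]; simp [gI_sq]
  · right; right; right; rw [gI_mod, h, pow_succ, gI_sq]; exact ⟨rfl, by decide⟩

lemma prim_ne_zero (h2 : 2 < Fintype.card F) (α : F) (hα : IsPrimitiveElt α) : α ≠ 0 := by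
  rintro rfl
  have : (univ : Finset F) ⊆ {0, 1} := by
    intro x _
    by_cases hx : x = 0
    · simp [hx]
    · obtain ⟨n, hn⟩ := hα x hx
      rcases Nat.eq_zero_or_pos n with h | h
      · subst h; simp at hn; simp [← hn]
      · rw [zero_pow h.ne'] at hn; exact absurd hn.symm hx
  have := Finset.card_le_card this
  have h3 : ({0, 1} : Finset F).card ≤ 2 := Finset.card_le_two
  rw [Finset.card_univ] at this
  omega

lemma exists_char (k : ℕ) (hk : Fintype.card F = 4 * k + 1) (hk0 : 0 < k) (α : F)
    (hα : IsPrimitiveElt α) : ∃ χ : MulChar F GaussianInt, ∀ n : ℕ, χ (α ^ n) = gI ^ n := by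
  have h0 := prim_ne_zero (by omega) α hα
  have hu : gI * gI ^ 3 = 1 := by rw [← pow_succ', gI_four]
  let ζ : GaussianIntˣ := ⟨gI, gI ^ 3, hu, by rw [mul_comm, hu]⟩
  have hζ : ζ ∈ rootsOfUnity (Fintype.card Fˣ) GaussianInt := by
    rw [mem_rootsOfUnity, Fintype.card_units, hk]
    ext1
    simp only [Units.val_pow_eq_pow_val, Units.val_one, Nat.add_sub_cancel]
    change gI ^ (4 * k) = 1
    rw [pow_mul, gI_four, one_pow]
  have hg : ∀ x, x ∈ Subgroup.zpowers (Units.mk0 α h0) := by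
    intro x
    obtain ⟨n, hn⟩ := hα x x.ne_zero
    refine ⟨n, ?_⟩
    ext1
    simpa using hn
  refine ⟨MulChar.ofRootOfUnity hζ hg, fun n => ?_⟩
  rw [map_pow]
  have := MulChar.ofRootOfUnity_spec hζ hg
  simp only [Units.val_mk0] at this
  rw [this]

variable (k : ℕ) (hk : Fintype.card F = 4 * k + 1) (hk1 : k % 2 = 1) (α : F)
    (hα : IsPrimitiveElt α) (χ : MulChar F GaussianInt) (hχ : ∀ n : ℕ, χ (α ^ n) = gI ^ n)

include hk hk1 hα hχ

lemma char_half : α ^ (2 * k) = -1 := by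
  have h0 := prim_ne_zero (by omega) α hα
  have h1 : (α ^ (2 * k)) ^ 2 = 1 := by
    rw [← pow_mul, show 2 * k * 2 = Fintype.card F - 1 by omega]
    exact FiniteField.pow_card_sub_one_eq_one α h0
  rcases eq_or_eq_neg_of_sq_eq_sq (α ^ (2 * k)) 1 (by rw [h1, one_pow]) with h | h
  · have := hχ (2 * k)
    rw [h, pow_mul, gI_sq, map_one, Odd.neg_one_pow (Nat.odd_iff.2 hk1)] at this
    exact absurd this (by decide)
  · exact h

lemma char_neg_one : χ (-1) = -1 := by
  rw [← char_half k hk hk1 α hα χ hχ, hχ, pow_mul, gI_sq, Odd.neg_one_pow (Nat.odd_iff.2 hk1)]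

lemma char_inv (x : F) : χ⁻¹ x = star (χ x) := by
  by_cases hx : x = 0
  · subst hx; rw [MulChar.map_zero, MulChar.map_zero, star_zero]
  · have h1 : χ⁻¹ x * χ x = 1 := by
      rw [MulChar.inv_apply', ← map_mul, inv_mul_cancel₀ hx, map_one]
    have h2 : star (χ x) * χ x = 1 := by
      obtain ⟨n, rfl⟩ := hα x hx
      rw [hχ]
      rcases gI_cases n with ⟨-, h⟩ | ⟨-, h⟩ | ⟨-, h⟩ | ⟨-, h⟩ <;> rw [h] <;> decide
    exact mul_right_cancel₀ (right_ne_zero_of_mul_eq_one h1) (h1.trans h2.symm)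

lemma char_ne_one : χ ≠ 1 := by
  rintro rfl
  have h0 := prim_ne_zero (by omega) α hα
  have := hχ 1
  rw [MulChar.one_apply (by simpa using h0)] at this
  exact absurd this (by decide)

lemma char_sq_ne_one : χ * χ ≠ 1 := by
  intro h
  have h0 := prim_ne_zero (by omega) α hα
  have h1 := hχ 1
  have h2 : (χ * χ) (α ^ 1) = 1 := by rw [h, MulChar.one_apply (by simpa using h0)]
  rw [MulChar.mul_apply, h1] at h2
  exact absurd h2 (by decide)

lemma qchar_pow (n : ℕ) : quadraticChar F (α ^ n) = (-1) ^ n := by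
  have h0 := prim_ne_zero (by omega) α hα
  rw [map_pow]
  congr 1
  rw [quadraticChar_neg_one_iff_not_isSquare]
  rintro ⟨r, hr⟩
  have hr0 : r ≠ 0 := by rintro rfl; simp at hr; exact h0 hr
  obtain ⟨n, rfl⟩ := hα r hr0
  have h1 := hχ 1
  rw [pow_one, hr, ← pow_add, hχ, ← two_mul, pow_mul, gI_sq] at h1
  rcases neg_one_pow_eq_or GaussianInt n with h | h <;> rw [h] at h1 <;> exact absurd h1 (by decide)

lemma char_sq (x : F) : χ x * χ x = (quadraticChar F x : ℤ) := by
  by_cases hx : x = 0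
  · subst hx; rw [MulChar.map_zero, MulChar.map_zero]; simp
  · obtain ⟨n, rfl⟩ := hα x hx
    rw [hχ, qchar_pow k hk hk1 α hα χ hχ, ← pow_two, ← pow_mul, mul_comm, pow_mul, gI_sq]
    push_cast
    rfl

lemma jac_star : jacobiSum χ⁻¹ χ⁻¹ = star (jacobiSum χ χ) := by
  rw [jacobiSum, jacobiSum, star_sum]
  refine sum_congr rfl fun x _ => ?_
  rw [char_inv k hk hk1 α hα χ hχ, char_inv k hk hk1 α hα χ hχ, star_mul']

lemma jac_norm : (jacobiSum χ χ).re ^ 2 + (jacobiSum χ χ).im ^ 2 = Fintype.card F := by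
  have hinj : Function.Injective GaussianInt.toComplex := GaussianInt.toComplex_injective
  have h1 : χ.ringHomComp GaussianInt.toComplex ≠ 1 := by
    rw [MulChar.ringHomComp_ne_one_iff hinj]; exact char_ne_one k hk hk1 α hα χ hχ
  have h2 : χ.ringHomComp GaussianInt.toComplex * χ.ringHomComp GaussianInt.toComplex ≠ 1 := by
    rw [← MulChar.ringHomComp_mul, MulChar.ringHomComp_ne_one_iff hinj]
    exact char_sq_ne_one k hk hk1 α hα χ hχ
  have hc : ringChar ℂ ≠ ringChar F := by
    rw [ringChar.eq_zero]
    exact (CharP.ringChar_ne_zero_of_finite F).symm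
  have := jacobiSum_mul_jacobiSum_inv hc h1 h1 h2
  rw [MulChar.ringHomComp_inv, jacobiSum_ringHomComp, jacobiSum_ringHomComp, ← map_mul,
    jac_star k hk hk1 α hα χ hχ] at this
  have h3 : jacobiSum χ χ * star (jacobiSum χ χ) = ((Fintype.card F : ℕ) : GaussianInt) := by
    apply hinj; rw [this]; simp
  have h4 := congrArg Zsqrtd.re h3
  simp at h4
  rw [← h4]; ring

lemma jac_mod : ((jacobiSum χ χ).re + (jacobiSum χ χ).im) % 4 = 1 := by
  have hchar : ringChar F ≠ 2 := by
    intro h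
    have := FiniteField.even_card_of_char_two h
    omega
  have h2 : (2 : F) ≠ 0 := Ring.two_ne_zero hchar
  let w : F → GaussianInt := fun x => χ x * χ (1 - x)
  let ε : F → ℤ := fun x => (w x).re + (w x).im
  have hJ : (jacobiSum χ χ).re + (jacobiSum χ χ).im = ∑ x, ε x := by
    let f : GaussianInt →+ ℤ :=
      { toFun := fun z => z.re + z.im, map_zero' := rfl, map_add' := fun a b => by simp; ring }
    exact map_sum f w univ
  have hε : ∀ x, x ≠ 0 → x ≠ 1 → ε x = 1 ∨ ε x = -1 := by
    intro x hx0 hx1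
    obtain ⟨n, hn⟩ := hα x hx0
    obtain ⟨n', hn'⟩ := hα (1 - x) (sub_ne_zero.2 hx1.symm)
    have : w x = gI ^ (n + n') := by
      simp only [w]
      rw [pow_add, ← hχ, ← hχ, hn, hn']
    simp only [ε, this]
    rcases gI_cases (n + n') with ⟨-, h⟩ | ⟨-, h⟩ | ⟨-, h⟩ | ⟨-, h⟩ <;> rw [h] <;> decide
  have hsymm : ∀ x, ε (1 - x) = ε x := by
    intro x
    simp only [ε, w, sub_sub_cancel, mul_comm]
  have hhalf : ε (2⁻¹) = -1 := by
    have e : (1 : F) - 2⁻¹ = 2⁻¹ := by field_simp; norm_num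
    have : w 2⁻¹ = -1 := by
      simp only [w]
      rw [e, char_sq k hk hk1 α hα χ hχ]
      have : quadraticChar F (2⁻¹) = -1 := by
        rw [quadraticChar_neg_one_iff_not_isSquare, isSquare_inv, FiniteField.isSquare_two_iff]
        omega
      rw [this]; simp
    simp only [ε, this]; decide
  let S : Finset F := {0, 1, 2⁻¹}
  have n1 : (1 : F) ≠ 2⁻¹ := by
    intro h; field_simp at h
    exact one_ne_zero (α := F) (by linear_combination h)
  have hS : S.card = 3 := by
    simp only [S]
    rw [Finset.card_insert_of_notMem, Finset.card_insert_of_notMem, Finset.card_singleton]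
    · simp [n1]
    · simp [h2.symm]
  have hz : ∑ x ∈ Sᶜ, (((ε x - 1 : ℤ)) : ZMod 4) = 0 := by
    refine Finset.sum_involution (fun x _ => 1 - x) ?_ ?_ ?_ ?_
    · intro x hx
      simp only [S, mem_compl, mem_insert, mem_singleton, not_or] at hx
      rw [hsymm]
      rcases hε x hx.1 hx.2.1 with h | h <;> rw [h] <;> decide
    · intro x hx _ he
      simp only [S, mem_compl, mem_insert, mem_singleton, not_or] at hx
      apply hx.2.2
      field_simp
      linear_combination -he
    · intro x hx
      simp only [S, mem_compl, mem_insert, mem_singleton, not_or] at hx ⊢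
      refine ⟨fun h => hx.2.1 (by linear_combination -h), fun h => hx.1 (by linear_combination -h), fun h => hx.2.2 ?_⟩
      field_simp at h ⊢
      linear_combination -h
    · intro x hx; simp
  rw [← Int.cast_sum, sum_sub_distrib, sum_const, card_compl, hS, hk] at hz
  rw [ZMod.intCast_zmod_eq_zero_iff_dvd] at hz
  have hsplit := Finset.sum_compl_add_sum S ε
  have hSs : ∑ x ∈ S, ε x = -1 := by
    simp only [S]
    rw [sum_insert (by simp [h2.symm]), sum_insert (by simp [n1]), sum_singleton, hhalf]
    simp [ε, w, MulChar.map_zero χ]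
  rw [hJ, ← hsplit, hSs]
  simp at hz
  omega

end Char

section Final
variable {F : Type*} [Field F] [Fintype F] [DecidableEq F]

/-- the sign function of the set `C_1 ∪ C_2` -/
def hfun (χ : MulChar F GaussianInt) (x : F) : ℤ := (χ x).im - (χ x).re

variable (k : ℕ) (hk : Fintype.card F = 4 * k + 1) (hk1 : k % 2 = 1) (α : F)
    (hα : IsPrimitiveElt α) (χ : MulChar F GaussianInt) (hχ : ∀ n : ℕ, χ (α ^ n) = gI ^ n)

include hk hk1 hα hχ

lemma mem_cyc4 (i : ℕ) (hi : i < 4) (x : F) : x ∈ cycClass α 4 i ↔ χ x = gI ^ i := by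
  have h0 := prim_ne_zero (by omega) α hα
  rw [aux_mem_cyc α h0]
  constructor
  · rintro ⟨j, rfl⟩
    rw [hχ, pow_add, pow_mul, gI_four, one_pow, one_mul]
  · intro h
    have hx : x ≠ 0 := by
      rintro rfl
      rw [MulChar.map_zero] at h
      interval_cases i <;> exact absurd h (by decide)
    obtain ⟨n, rfl⟩ := hα x hx
    rw [hχ, gI_mod] at h
    have hn := Nat.mod_lt n (show 0 < 4 by norm_num)
    have : n % 4 = i := by
      generalize n % 4 = r at *
      interval_cases i <;> interval_cases r <;> first | rfl | exact absurd h (by decide)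
    exact ⟨n / 4, by rw [← this, Nat.div_add_mod]⟩

lemma mem_cyc2 (i : ℕ) (hi : i < 2) (x : F) :
    x ∈ cycClass α 2 i ↔ quadraticChar F x = (-1) ^ i := by
  have h0 := prim_ne_zero (by omega) α hα
  rw [aux_mem_cyc α h0]
  constructor
  · rintro ⟨j, rfl⟩
    rw [qchar_pow k hk hk1 α hα χ hχ, pow_add, pow_mul]; simp
  · intro h
    have hx : x ≠ 0 := by
      rintro rfl
      rw [MulChar.map_zero] at h
      interval_cases i <;> simp at h
    obtain ⟨n, rfl⟩ := hα x hx
    rw [qchar_pow k hk hk1 α hα χ hχ] at h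
    have : n % 2 = i := by
      rw [neg_one_pow_eq_pow_mod_two] at h
      have hn := Nat.mod_lt n (show 0 < 2 by norm_num)
      generalize n % 2 = r at *
      interval_cases i <;> interval_cases r <;> simp_all
    exact ⟨n / 2, by rw [← this, Nat.div_add_mod]⟩

lemma char_values (x : F) : (x = 0 ∧ χ x = 0) ∨
    (x ≠ 0 ∧ (χ x = 1 ∨ χ x = ⟨0, 1⟩ ∨ χ x = -1 ∨ χ x = ⟨0, -1⟩)) := by
  by_cases hx : x = 0
  · left; exact ⟨hx, by rw [hx, MulChar.map_zero]⟩
  · right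
    refine ⟨hx, ?_⟩
    obtain ⟨n, rfl⟩ := hα x hx
    rw [hχ]
    rcases gI_cases n with ⟨-, h⟩ | ⟨-, h⟩ | ⟨-, h⟩ | ⟨-, h⟩ <;> simp [h]

lemma ind_12 (x : F) : (2 : ℤ) * (if x ∈ cycClass α 4 1 ∪ cycClass α 4 2 then 1 else 0)
    = hfun χ x + 1 + (-1) * (if x = 0 then 1 else 0) := by
  have e : x ∈ cycClass α 4 1 ∪ cycClass α 4 2 ↔ (χ x = gI ^ 1 ∨ χ x = gI ^ 2) := by
    rw [mem_union, mem_cyc4 k hk hk1 α hα χ hχ 1 (by norm_num),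
      mem_cyc4 k hk hk1 α hα χ hχ 2 (by norm_num)]
  rw [if_congr e rfl rfl, hfun]
  rcases char_values k hk hk1 α hα χ hχ x with ⟨h0, h⟩ | ⟨h0, h⟩
  · rw [if_pos h0]
    generalize χ x = z at *
    subst h; decide
  · rw [if_neg h0]
    generalize χ x = z at *
    rcases h with h | h | h | h <;> subst h <;> decide

lemma ind_12_zero (x : F) : (2 : ℤ) * (if x ∈ cycClass α 4 1 ∪ cycClass α 4 2 ∪ {0} then 1 else 0)
    = hfun χ x + 1 + 1 * (if x = 0 then 1 else 0) := by
  by_cases hx : x = 0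
  · subst hx
    simp [hfun, MulChar.map_zero χ]
  · have := ind_12 k hk hk1 α hα χ hχ x
    simp only [mem_union, mem_singleton, hx, or_false, if_false] at this ⊢
    linarith

lemma qvalues (x : F) : (x = 0 ∧ quadraticChar F x = 0) ∨
    (x ≠ 0 ∧ (quadraticChar F x = 1 ∨ quadraticChar F x = -1)) := by
  by_cases hx : x = 0
  · left; exact ⟨hx, by rw [hx, MulChar.map_zero]⟩
  · right; exact ⟨hx, quadraticChar_dichotomy hx⟩

lemma ind_q (i : ℕ) (hi : i < 2) (x : F) : (2 : ℤ) * (if x ∈ cycClass α 2 i then 1 else 0)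
    = (-1) ^ i * quadraticChar F x + 1 + (-1) * (if x = 0 then 1 else 0) := by
  rw [if_congr (mem_cyc2 k hk hk1 α hα χ hχ i hi x) rfl rfl]
  rcases qvalues k hk hk1 α hα χ hχ x with ⟨h0, h⟩ | ⟨h0, h | h⟩
  · rw [if_pos h0, h]; interval_cases i <;> decide
  · rw [if_neg h0, h]; interval_cases i <;> decide
  · rw [if_neg h0, h]; interval_cases i <;> decide

lemma ind_q_zero (i : ℕ) (hi : i < 2) (x : F) : (2 : ℤ) * (if x ∈ cycClass α 2 i ∪ {0} then 1 else 0)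
    = (-1) ^ i * quadraticChar F x + 1 + 1 * (if x = 0 then 1 else 0) := by
  by_cases hx : x = 0
  · subst hx
    simp [MulChar.map_zero]
  · have := ind_q k hk hk1 α hα χ hχ i hi x
    simp only [mem_union, mem_singleton, hx, or_false, if_false] at this ⊢
    linarith

lemma hfun_neg (x : F) : hfun χ (-x) = - hfun χ x := by
  rw [hfun, hfun, show -x = (-1) * x by ring, map_mul, char_neg_one k hk hk1 α hα χ hχ]
  simp; ring

lemma hfun_sum : ∑ x, hfun χ x = 0 := by
  let f : GaussianInt →+ ℤ :=
    { toFun := fun z => z.im - z.re, map_zero' := rfl, map_add' := fun a b => by simp; ring }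
  have := map_sum f χ univ
  rw [MulChar.sum_eq_zero_of_ne_one (char_ne_one k hk hk1 α hα χ hχ), map_zero] at this
  exact this.symm

lemma qchar_neg_one : quadraticChar F (-1) = 1 := by
  rw [← char_half k hk hk1 α hα χ hχ, qchar_pow k hk hk1 α hα χ hχ, pow_mul]; simp

lemma qchar_ne_one : quadraticChar F ≠ 1 := by
  intro h
  have h0 := prim_ne_zero (by omega) α hα
  have h1 := qchar_pow k hk hk1 α hα χ hχ 1
  rw [h, MulChar.one_apply (by simpa using h0)] at h1
  simp at h1

lemma q_corr (d : F) (hd : d ≠ 0) : ∑ x : F, quadraticChar F x * quadraticChar F (x - d) = -1 := by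
  rw [aux_corr _ _ d hd]
  have h := jacobiSum_nontrivial_inv (qchar_ne_one k hk hk1 α hα χ hχ)
  rw [(quadraticChar_isQuadratic F).inv] at h
  rw [h, qchar_neg_one k hk hk1 α hα χ hχ]
  rcases quadraticChar_dichotomy hd with h | h <;> rw [h] <;> norm_num

lemma h_corr (d : F) (hd : d ≠ 0) : ∑ x : F, hfun χ x * hfun χ (x - d) =
    -1 + quadraticChar F d * (jacobiSum χ χ).im := by
  have e : ∀ x, hfun χ x * hfun χ (x - d) = (χ x * χ⁻¹ (x - d)).re - (χ x * χ (x - d)).im := by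
    intro x
    rw [char_inv k hk hk1 α hα χ hχ, hfun, hfun]
    simp
    ring
  rw [sum_congr rfl fun x _ => e x, sum_sub_distrib]
  let f : GaussianInt →+ ℤ :=
    { toFun := fun z => z.re, map_zero' := rfl, map_add' := fun a b => by simp }
  let f' : GaussianInt →+ ℤ :=
    { toFun := fun z => z.im, map_zero' := rfl, map_add' := fun a b => by simp }
  have h1 : ∑ x, (χ x * χ⁻¹ (x - d)).re = (∑ x, (χ x * χ⁻¹ (x - d))).re := (map_sum f (fun x => χ x * χ⁻¹ (x - d)) univ).symm
  have h2 : ∑ x, (χ x * χ (x - d)).im = (∑ x, (χ x * χ (x - d))).im := (map_sum f' (fun x => χ x * χ (x - d)) univ).symm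
  rw [h1, h2, aux_corr _ _ d hd, aux_corr _ _ d hd, jacobiSum_nontrivial_inv (char_ne_one k hk hk1 α hα χ hχ),
    char_sq k hk hk1 α hα χ hχ, char_neg_one k hk hk1 α hα χ hχ, char_inv k hk hk1 α hα χ hχ (-1),
    char_neg_one k hk hk1 α hα χ hχ]
  have h3 : χ d * χ⁻¹ d = 1 := by
    rw [MulChar.inv_apply', ← map_mul, mul_inv_cancel₀ hd, map_one]
  rw [h3]
  simp

lemma im_mod : (jacobiSum χ χ).im % 4 = 2 := by
  have := aux_main _ (hfun χ) (-1) (ind_12 k hk hk1 α hα χ hχ) (hfun_sum k hk hk1 α hα χ hχ) 1 one_ne_zero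
  rw [h_corr k hk hk1 α hα χ hχ 1 one_ne_zero, hfun_neg k hk hk1 α hα χ hχ, hk] at this
  simp at this
  omega

lemma im_eq (p m : ℕ) (hp : p.Prime) (hpm : Fintype.card F = p ^ m) (s t : ℤ)
    (hst : (Fintype.card F : ℤ) = s ^ 2 + t ^ 2) (hs4 : s % 4 = 1)
    (ht : (t : F) * α ^ k = (s : F)) (ht2 : t = -2 ∨ t = 2) : (jacobiSum χ χ).im = t := by
  have h0 := prim_ne_zero (by omega) α hα
  have hpF := Fact.mk hp
  have hchar : CharP F p := charP_of_card_eq_prime_pow hpm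
  have hp2 : p % 2 = 1 := by
    rcases hp.eq_two_or_odd with h | h
    · exfalso
      rcases Nat.eq_zero_or_pos m with hm | hm
      · subst hm; simp at hpm; omega
      · have : 2 ∣ p ^ m := by rw [h]; exact dvd_pow_self _ hm.ne'
        omega
    · exact h
  have hp4 : p % 4 = 1 := by
    by_contra hcon
    have hmod : (p ^ m) % 8 = 5 := by omega
    have hp8 : p ^ 2 % 8 = 1 := by
      rw [pow_two, Nat.mul_mod]
      have : p % 8 = 1 ∨ p % 8 = 3 ∨ p % 8 = 5 ∨ p % 8 = 7 := by omega
      rcases this with h | h | h | h <;> rw [h]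
    rw [← Nat.div_add_mod m 2, pow_add, pow_mul, Nat.mul_mod, Nat.pow_mod, hp8, one_pow] at hmod
    rcases Nat.mod_two_eq_zero_or_one m with h | h <;> rw [h] at hmod <;> simp at hmod
    omega
  have hω : α ^ k * α ^ k = ((-1 : ℤ) : F) := by
    rw [← pow_add, ← two_mul, char_half k hk hk1 α hα χ hχ]; simp
  let φ : GaussianInt →+* F := Zsqrtd.lift ⟨α ^ k, hω⟩
  have hφ : ∀ z : GaussianInt, φ z = z.re + z.im * α ^ k := fun z => rfl
  have hφχ : ∀ x, φ (χ x) = x ^ k := by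
    intro x
    by_cases hx : x = 0
    · rw [hx, MulChar.map_zero, map_zero, zero_pow (by omega)]
    · obtain ⟨n, rfl⟩ := hα x hx
      rw [hχ, map_pow, hφ]
      simp [gI, ← pow_mul, mul_comm]
  have hφχ' : ∀ x, φ (χ⁻¹ x) = x ^ (3 * k) := by
    intro x
    by_cases hx : x = 0
    · rw [hx, MulChar.map_zero, map_zero, zero_pow (by omega)]
    · rw [MulChar.inv_apply', hφχ, inv_pow]
      refine inv_eq_of_mul_eq_one_left ?_
      rw [← pow_add]
      rw [show 3 * k + k = Fintype.card F - 1 by omega]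
      exact FiniteField.pow_card_sub_one_eq_one x hx
  have hJ0 : φ (jacobiSum χ χ) = 0 := by
    rw [jacobiSum, map_sum, ← aux_sum_zero k hk (by omega)]
    refine sum_congr rfl fun x _ => ?_
    rw [map_mul, hφχ, hφχ]
  have hJ1 : φ (star (jacobiSum χ χ)) ≠ 0 := by
    rw [← jac_star k hk hk1 α hα χ hχ, jacobiSum, map_sum]
    have hc : ((3 * k).choose k : F) ≠ 0 := by
      rw [Ne, CharP.cast_eq_zero_iff F p]
      have := aux_lucas p hp (p / 4) (by omega) m
      rwa [← hpm, hk, show (4 * k + 1 - 1) / 4 = k by omega] at this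
    have := aux_sum_ne k hk (by omega) hc
    convert this using 2 with x
    rw [map_mul, hφχ', hφχ']
  rw [hφ] at hJ0 hJ1
  simp only [Zsqrtd.re_star, Zsqrtd.im_star, Int.cast_neg] at hJ1
  have htF : (t : F) ≠ 0 := by
    rw [Ne, CharP.intCast_eq_zero_iff F p]
    intro h
    have h3 : (p : ℤ) ∣ 2 := by
      rcases ht2 with rfl | rfl
      · simpa using h
      · exact h
    have h4 : p ∣ 2 := by exact_mod_cast h3
    have := (Nat.prime_dvd_prime_iff_eq hp Nat.prime_two).1 h4
    omega
  refine aux_int p m hp (Fintype.card F) s t (jacobiSum χ χ).re _ (by exact_mod_cast hpm) hst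
    (jac_norm k hk hk1 α hα χ hχ).symm ht2 ?_ ?_ (im_mod k hk hk1 α hα χ hχ) (jac_mod k hk hk1 α hα χ hχ) hs4
  · rw [← CharP.intCast_eq_zero_iff F p]
    push_cast
    rw [← ht]
    intro h
    have : (t : F) * ((jacobiSum χ χ).re + -((jacobiSum χ χ).im : F) * α ^ k) = 0 := by
      rw [← h]; ring
    rcases mul_eq_zero.1 this with h | h
    · exact htF h
    · exact hJ1 h
  · rw [← CharP.intCast_eq_zero_iff F p]
    push_cast
    rw [← ht]
    linear_combination (t : F) * hJ0

lemma skew_final (D A : Finset F) (σ c t : ℤ) (hσ : σ ^ 2 = 1)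
    (hc : c = 1 ∨ c = -1) (ht : t = 2 * c * σ) (him : (jacobiSum χ χ).im = t)
    (hA : ∀ x, (2 : ℤ) * (if x ∈ A then 1 else 0) = σ * quadraticChar F x + 1 + c * (if x = 0 then 1 else 0))
    (hD : ∀ x, (2 : ℤ) * (if x ∈ D then 1 else 0) = hfun χ x + 1 + c * (if x = 0 then 1 else 0))
    (K lam mu : ℕ) (hK : 2 * (K : ℤ) = Fintype.card F + c)
    (hlam : 4 * (lam : ℤ) = Fintype.card F - 1 + 4 * c) (hmu : 4 * (mu : ℤ) = Fintype.card F - 1) :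
    IsSkewPDS D A (Fintype.card F) K lam mu := by
  have hsq : ∑ x, σ * quadraticChar F x = 0 := by
    rw [← mul_sum, MulChar.sum_eq_zero_of_ne_one (qchar_ne_one k hk hk1 α hα χ hχ), mul_zero]
  have cA : ∀ d, d ≠ 0 → 4 * ((intDiff A).count d : ℤ) =
      Fintype.card F - 1 + 2 * c + 2 * c * (σ * quadraticChar F d) := by
    intro d hd
    rw [aux_main A (fun x => σ * quadraticChar F x) c hA hsq d hd]
    have : ∑ x, σ * quadraticChar F x * (σ * quadraticChar F (x - d)) = -1 := by
      rw [← q_corr k hk hk1 α hα χ hχ d hd]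
      refine sum_congr rfl fun x _ => ?_
      linear_combination (quadraticChar F x * quadraticChar F (x - d)) * hσ
    rw [this, show -d = (-1) * d by ring, map_mul, qchar_neg_one k hk hk1 α hα χ hχ]
    ring
  have cD : ∀ d, d ≠ 0 → 4 * ((intDiff D).count d : ℤ) =
      Fintype.card F - 1 + 2 * c + 2 * c * (σ * quadraticChar F d) := by
    intro d hd
    rw [aux_main D (hfun χ) c hD (hfun_sum k hk hk1 α hα χ hχ) d hd, h_corr k hk hk1 α hα χ hχ d hd, him, ht,
      hfun_neg k hk hk1 α hα χ hχ]
    ring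
  have vin : ∀ d, d ≠ 0 → d ∈ A → σ * quadraticChar F d = 1 := by
    intro d hd hdA
    have := hA d
    simp only [hd, hdA, if_true, if_false] at this
    linarith
  have vout : ∀ d, d ≠ 0 → d ∉ A → σ * quadraticChar F d = -1 := by
    intro d hd hdA
    have := hA d
    simp only [hd, hdA, if_false] at this
    linarith
  have fin : ∀ E : Finset F, (∀ d, d ≠ 0 → 4 * ((intDiff E).count d : ℤ) =
      Fintype.card F - 1 + 2 * c + 2 * c * (σ * quadraticChar F d)) →
      intDiff E = lam • (A.erase 0).val + mu • (Gstar F \ A).val := by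
    intro E hE
    refine aux_diff_eq E A lam mu ?_ ?_
    · intro d hd hdA
      have := hE d hd
      rw [vin d hd hdA] at this
      omega
    · intro d hd hdA
      have := hE d hd
      rw [vout d hd hdA] at this
      omega
  refine ⟨⟨rfl, ?_, fin A cA⟩, ?_, fin D cD⟩
  · have := aux_card A _ c hA hsq
    omega
  · have := aux_card D _ c hD (hfun_sum k hk hk1 α hα χ hχ)
    omega

end Final

/-- For a prime power `q = p^m ≡ 5 (mod 8)` with Katre–Rajwade normalized
representation `q = s² + t²`, `t = ±2`, and `D = C_0^4 ∪ C_3^4`: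
(i) `F_q^* \ D = -D = C_1^4 ∪ C_2^4` is a Paley skew PDS corresponding to `C_0^2` if
`t = -2` and to `C_1^2` if `t = 2`;
(ii) `F_q \ D = C_1^4 ∪ C_2^4 ∪ {0}` is a skew PDS corresponding to the
`(q,(q+1)/2,(q+3)/4,(q-1)/4)`-PDS `C_1^2 ∪ {0}` if `t = -2` and to `C_0^2 ∪ {0}` if
`t = 2`. -/
theorem stmt_3 {F : Type*} [Field F] [Fintype F] [DecidableEq F]
    (q p m : ℕ) (hp : p.Prime) (hq : Fintype.card F = q) (hqpm : q = p ^ m)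
    (hq8 : q % 8 = 5)
    (α : F) (hα : IsPrimitiveElt α)
    (s t : ℤ) (hst : (q : ℤ) = s ^ 2 + t ^ 2)
    (hps : ¬((p : ℤ) ∣ s)) (hs4 : s % 4 = 1)
    (ht : (t : F) * α ^ ((q - 1) / 4) = (s : F))
    (ht2 : t = -2 ∨ t = 2) :
    (Gstar F \ (cycClass α 4 0 ∪ cycClass α 4 3) =
        (cycClass α 4 0 ∪ cycClass α 4 3).image (fun x => -x)) ∧
    ((cycClass α 4 0 ∪ cycClass α 4 3).image (fun x => -x) =
        cycClass α 4 1 ∪ cycClass α 4 2) ∧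
    (t = -2 → IsSkewPDS (cycClass α 4 1 ∪ cycClass α 4 2) (cycClass α 2 0)
        q ((q - 1) / 2) ((q - 5) / 4) ((q - 1) / 4)) ∧
    (t = 2 → IsSkewPDS (cycClass α 4 1 ∪ cycClass α 4 2) (cycClass α 2 1)
        q ((q - 1) / 2) ((q - 5) / 4) ((q - 1) / 4)) ∧
    (Finset.univ \ (cycClass α 4 0 ∪ cycClass α 4 3) =
        cycClass α 4 1 ∪ cycClass α 4 2 ∪ {0}) ∧
    (t = -2 → IsSkewPDS (cycClass α 4 1 ∪ cycClass α 4 2 ∪ {0})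
        (cycClass α 2 1 ∪ {0}) q ((q + 1) / 2) ((q + 3) / 4) ((q - 1) / 4)) ∧
    (t = 2 → IsSkewPDS (cycClass α 4 1 ∪ cycClass α 4 2 ∪ {0})
        (cycClass α 2 0 ∪ {0}) q ((q + 1) / 2) ((q + 3) / 4) ((q - 1) / 4)) := by
  subst hq
  obtain ⟨k, hk, hk1⟩ : ∃ k, Fintype.card F = 4 * k + 1 ∧ k % 2 = 1 :=
    ⟨Fintype.card F / 4, by omega, by omega⟩
  obtain ⟨χ, hχ⟩ := exists_char k hk (by omega) α hα
  rw [show (Fintype.card F - 1) / 4 = k by omega] at ht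
  have him := im_eq k hk hk1 α hα χ hχ p m hp hqpm s t hst hs4 ht ht2
  have hval := char_values k hk hk1 α hα χ hχ
  have m0 := mem_cyc4 k hk hk1 α hα χ hχ 0 (by norm_num)
  have m1 := mem_cyc4 k hk hk1 α hα χ hχ 1 (by norm_num)
  have m2 := mem_cyc4 k hk hk1 α hα χ hχ 2 (by norm_num)
  have m3 := mem_cyc4 k hk hk1 α hα χ hχ 3 (by norm_num)
  have himg : ∀ x, x ∈ (cycClass α 4 0 ∪ cycClass α 4 3).image (fun x => -x) ↔
      (χ x = -1 ∨ χ x = ⟨0, 1⟩) := by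
    intro x
    have e1 : χ (-x) = - χ x := by
      rw [show -x = (-1) * x by ring, map_mul, char_neg_one k hk hk1 α hα χ hχ]; ring
    have e2 : x ∈ (cycClass α 4 0 ∪ cycClass α 4 3).image (fun x => -x) ↔
        -x ∈ cycClass α 4 0 ∪ cycClass α 4 3 := by
      rw [mem_image]
      constructor
      · rintro ⟨y, hy, rfl⟩; rwa [neg_neg]
      · intro h; exact ⟨-x, h, neg_neg x⟩
    rw [e2, mem_union, m0, m3, e1]
    rcases hval x with ⟨-, h⟩ | ⟨-, h | h | h | h⟩ <;> rw [h] <;> decide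
  refine ⟨?_, ?_, ?_, ?_, ?_, ?_, ?_⟩
  · ext x
    rw [himg, mem_sdiff, mem_union, m0, m3, Gstar, mem_erase]
    rcases hval x with ⟨h0, h⟩ | ⟨h0, h | h | h | h⟩ <;> rw [h] <;>
      simp only [h0, mem_univ, ne_eq, not_true, not_false_eq_true] <;> decide
  · ext x
    rw [himg, mem_union, m1, m2]
    rcases hval x with ⟨h0, h⟩ | ⟨h0, h | h | h | h⟩ <;> rw [h] <;> decide
  · intro h
    have hA := ind_q k hk hk1 α hα χ hχ 0 (by norm_num)
    exact skew_final k hk hk1 α hα χ hχ _ _ ((-1) ^ 0) (-1) t (by norm_num) (by norm_num) (by rw [h]; norm_num)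
      him hA (ind_12 k hk hk1 α hα χ hχ) _ _ _ (by omega) (by omega) (by omega)
  · intro h
    have hA := ind_q k hk hk1 α hα χ hχ 1 (by norm_num)
    exact skew_final k hk hk1 α hα χ hχ _ _ ((-1) ^ 1) (-1) t (by norm_num) (by norm_num) (by rw [h]; norm_num)
      him hA (ind_12 k hk hk1 α hα χ hχ) _ _ _ (by omega) (by omega) (by omega)
  · ext x
    rw [mem_union, mem_union, m1, m2, mem_sdiff, mem_union, m0, m3, mem_singleton]
    rcases hval x with ⟨h0, h⟩ | ⟨h0, h | h | h | h⟩ <;> rw [h] <;>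
      simp only [h0, mem_univ] <;> decide
  · intro h
    have hA := ind_q_zero k hk hk1 α hα χ hχ 1 (by norm_num)
    exact skew_final k hk hk1 α hα χ hχ _ _ ((-1) ^ 1) 1 t (by norm_num) (by norm_num) (by rw [h]; norm_num)
      him hA (ind_12_zero k hk hk1 α hα χ hχ) _ _ _ (by omega) (by omega) (by omega)
  · intro h
    have hA := ind_q_zero k hk hk1 α hα χ hχ 0 (by norm_num)
    exact skew_final k hk hk1 α hα χ hχ _ _ ((-1) ^ 0) 1 t (by norm_num) (by norm_num) (by rw [h]; norm_num)
      him hA (ind_12_zero k hk hk1 α hα χ hχ) _ _ _ (by omega) (by omega) (by omega)
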